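/- arXiv:2202.02855 — 2 statements merged into one kernel-verified Lean document; each statement's English description precedes it below -/
import Mathlib

section
/- Let X be a locally compact Hausdorff space with an action of a finite group Γ, and let H₁, H₂ be Hilbert spaces carrying unitary representations of Γ. Suppose that for every x ∈ X, the restrictions of H₁ and H₂ to the stabilizer Γ_x are weakly equivalent (each is contained in a multiple of the other). Then the Γ-fixed bimodule C₀(X, 𝔎(H₂,H₁))^Γ implements a strong Morita equivalence between the fixed-point C*-algebras C₀(X, 𝔎(H₁))^Γ and C₀(X, 𝔎(H₂))^Γ. -/
/-!
The proof reduces the density to single fibres, proves it there by Schur's lemma, and glues.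

*Fibrewise.* Let `G` be the stabilizer of a point and `K` a compact operator on `H₁` commuting with
`G`. Since `G` is finite, `K` is a norm limit of operators `P_V K` with `V` finite-dimensional and
`G`-stable (`exists_stable_approx`). The projection `P_V` is a sum of projections `P_W` onto
irreducible subspaces, and by weak equivalence each `W` embeds equivariantly in `H₂`. If `Φ` is
such an embedding, extended by zero to `H₁`, then Schur's lemma shows that `Φ* Φ` is a nonzero
multiple of `P_W` (`starProjection_mem_interSpan_of_minimal`). Hence `P_V`, and with it
`P_V K`, is a sum of operators `T S*` with `T` and `S` compact intertwiners `H₂ → H₁`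
(`exists_interSpan_approx`).

*Extension.* A compact intertwiner for the stabilizer of `x` is the value at `x` of an element of
`C₀(X, 𝔎(H₂, H₁))^Γ`: multiply it by a bump function at `x` which vanishes on the rest of the orbit
and average over `Γ` (`exists_fixBimod_apply_eq`).

*Gluing.* Given `f` in `C₀(X, 𝔎(H₁))^Γ` and `ε > 0`, every point `x` thus has an `F x` in the span
of the `g₁ g₂*` which is `ε`-close to `f` on an open neighbourhood of `x`. As `f` and `F x` are
equivariant and the representations unitary, this neighbourhood may be taken `Γ`-invariant. A
partition of unity on the compact set `{‖f‖ ≥ ε}`, made invariant by averaging, combines finitely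
many of the `F x` to an `ε`-approximation of `f` (`mem_closure_fixSpan`). The argument needs only
that the irreducible constituents of `H₁` occur in `H₂`. The assertion about `C₀(X, 𝔎(H₂))^Γ`
follows by exchanging `H₁` and `H₂` and taking adjoints, which preserves compactness by Schauder's
theorem (`isCompactOperator_adjoint`).
-/

open ZeroAtInfty MulAction

/-! ### Compact intertwiners -/

/-- `T : H₂ → H₁` intertwines the representations `π₂` and `π₁`. -/
def Intertwines {G H₁ H₂ : Type} [Group G]
    [NormedAddCommGroup H₁] [InnerProductSpace ℂ H₁]
    [NormedAddCommGroup H₂] [InnerProductSpace ℂ H₂]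
    (π₁ : G →* (H₁ →L[ℂ] H₁)) (π₂ : G →* (H₂ →L[ℂ] H₂)) (T : H₂ →L[ℂ] H₁) : Prop :=
  ∀ s v, T (π₂ s v) = π₁ s (T v)

/-- The subspace `V` is stable under the representation `π`. -/
def IsStable {G H : Type} [Group G] [NormedAddCommGroup H] [InnerProductSpace ℂ H]
    (π : G →* (H →L[ℂ] H)) (V : Submodule ℂ H) : Prop :=
  ∀ s, ∀ v ∈ V, π s v ∈ V

/-- The span of the operators `T S*`, where `T` and `S` are compact intertwiners `H₂ → H₁`. -/
noncomputable def interSpan {G H₁ H₂ : Type} [Group G]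
    [NormedAddCommGroup H₁] [InnerProductSpace ℂ H₁] [CompleteSpace H₁]
    [NormedAddCommGroup H₂] [InnerProductSpace ℂ H₂] [CompleteSpace H₂]
    (π₁ : G →* (H₁ →L[ℂ] H₁)) (π₂ : G →* (H₂ →L[ℂ] H₂)) : Submodule ℂ (H₁ →L[ℂ] H₁) :=
  Submodule.span ℂ {L | ∃ T S : H₂ →L[ℂ] H₁,
    IsCompactOperator T ∧ Intertwines π₁ π₂ T ∧ IsCompactOperator S ∧ Intertwines π₁ π₂ S ∧
      L = T ∘L ContinuousLinearMap.adjoint S}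

section Operators

set_option linter.unusedSectionVars false

variable {G H H₁ H₂ : Type} [Group G]
  [NormedAddCommGroup H] [InnerProductSpace ℂ H] [CompleteSpace H]
  [NormedAddCommGroup H₁] [InnerProductSpace ℂ H₁] [CompleteSpace H₁]
  [NormedAddCommGroup H₂] [InnerProductSpace ℂ H₂] [CompleteSpace H₂]

lemma rep_inv_apply (π : G →* (H →L[ℂ] H)) (s : G) (v : H) : π s⁻¹ (π s v) = v := by
  rw [← mul_apply_eq_comp, ← map_mul]; simp

lemma rep_apply_inv (π : G →* (H →L[ℂ] H)) (s : G) (v : H) : π s (π s⁻¹ v) = v := by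
  rw [← mul_apply_eq_comp, ← map_mul]; simp

lemma adjoint_rep (π : G →* (H →L[ℂ] H)) (hu : ∀ s, π s ∈ unitary (H →L[ℂ] H)) (s : G) :
    ContinuousLinearMap.adjoint (π s) = π s⁻¹ := by
  have h1 : star (π s) * π s = 1 := (Unitary.mem_iff.1 (hu s)).1
  have h2 : π s * π s⁻¹ = 1 := by rw [← map_mul]; simp
  exact left_inv_eq_right_inv h1 h2

lemma inner_rep_left (π : G →* (H →L[ℂ] H)) (hu : ∀ s, π s ∈ unitary (H →L[ℂ] H)) (s : G)
    (v w : H) : inner ℂ (π s v) w = inner ℂ v (π s⁻¹ w) := by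
  rw [← adjoint_rep π hu, ContinuousLinearMap.adjoint_inner_right]

lemma Intertwines.adjoint {π₁ : G →* (H₁ →L[ℂ] H₁)} {π₂ : G →* (H₂ →L[ℂ] H₂)}
    (hu₁ : ∀ s, π₁ s ∈ unitary (H₁ →L[ℂ] H₁)) (hu₂ : ∀ s, π₂ s ∈ unitary (H₂ →L[ℂ] H₂))
    {T : H₂ →L[ℂ] H₁} (hT : Intertwines π₁ π₂ T) :
    Intertwines π₂ π₁ (ContinuousLinearMap.adjoint T) := by
  intro s v
  refine ext_inner_right ℂ fun w => ?_
  rw [ContinuousLinearMap.adjoint_inner_left, inner_rep_left π₁ hu₁, inner_rep_left π₂ hu₂,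
    ContinuousLinearMap.adjoint_inner_left, hT]

lemma IsStable.orthogonal {π : G →* (H →L[ℂ] H)} (hu : ∀ s, π s ∈ unitary (H →L[ℂ] H))
    {V : Submodule ℂ H} (hV : IsStable π V) : IsStable π Vᗮ := by
  intro s v hv
  rw [Submodule.mem_orthogonal'] at hv ⊢
  intro u huV
  rw [inner_rep_left π hu]
  exact hv _ (hV _ _ huV)

lemma IsStable.starProjection {π : G →* (H →L[ℂ] H)} (hu : ∀ s, π s ∈ unitary (H →L[ℂ] H))
    {V : Submodule ℂ H} [V.HasOrthogonalProjection] (hV : IsStable π V) :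
    Intertwines π π V.starProjection := by
  intro s v
  refine Submodule.eq_starProjection_of_mem_orthogonal
    (hV s _ (Submodule.starProjection_apply_mem V v)) ?_
  rw [← map_sub]
  exact hV.orthogonal hu s _ (V.sub_starProjection_mem_orthogonal v)

/-- A compact operator is approximated by its composites with the projections onto
finite-dimensional subspaces, which can be chosen stable under a given finite group. -/
lemma exists_stable_approx [Finite G] (π : G →* (H₁ →L[ℂ] H₁)) (K : H₂ →L[ℂ] H₁)
    (hK : IsCompactOperator K) {ε : ℝ} (hε : 0 < ε) :
    ∃ V : Submodule ℂ H₁, ∃ _ : FiniteDimensional ℂ V, IsStable π V ∧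
      ‖K - V.starProjection ∘L K‖ ≤ ε := by
  obtain ⟨C, hC, hKC⟩ := hK.image_closedBall_subset_compact (f := (K : H₂ →ₗ[ℂ] H₁)) 1
  obtain ⟨t, ht, hCt⟩ := Metric.totallyBounded_iff.1 hC.totallyBounded ε hε
  have hfin : (⋃ s : G, π s '' t).Finite := Set.finite_iUnion fun s => ht.image _
  refine ⟨Submodule.span ℂ (⋃ s : G, π s '' t), FiniteDimensional.span_of_finite ℂ hfin, ?_, ?_⟩
  · intro s v hv
    induction hv using Submodule.span_induction with
    | mem x hx =>
      obtain ⟨r, y, hy, rfl⟩ := by simpa using hx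
      refine Submodule.subset_span (Set.mem_iUnion.2 ⟨s * r, y, hy, ?_⟩)
      simp
    | zero => simp
    | add x y _ _ hx hy => rw [map_add]; exact add_mem hx hy
    | smul c x _ hx => rw [map_smul]; exact Submodule.smul_mem _ _ hx
  · set V := Submodule.span ℂ (⋃ s : G, π s '' t)
    have := FiniteDimensional.span_of_finite ℂ hfin
    refine ContinuousLinearMap.opNorm_le_of_unit_norm hε.le fun v hv => ?_
    have hmem := hCt (hKC ⟨v, by simp [hv], rfl⟩)
    obtain ⟨y, hy, hdist⟩ := by simpa using hmem
    have hyV : y ∈ V := Submodule.subset_span (Set.mem_iUnion.2 ⟨1, y, hy, by simp⟩)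
    have : (K - V.starProjection ∘L K) v = Vᗮ.starProjection (K v - y) := by
      rw [Submodule.starProjection_orthogonal_val]
      simp [Submodule.starProjection_eq_self_iff.2 hyV]
    rw [this]
    refine (Submodule.norm_starProjection_apply_le _ _).trans ?_
    rw [← dist_eq_norm]; exact hdist.le

lemma isCompactOperator_comp_orthogonalProjectionOnto (W : Submodule ℂ H) [FiniteDimensional ℂ W]
    (φ : W →L[ℂ] H₂) : IsCompactOperator (φ ∘L W.orthogonalProjectionOnto) := by
  have : ProperSpace W := FiniteDimensional.proper ℂ W
  exact (isCompactOperator_of_locallyCompactSpace_dom W.orthogonalProjectionOnto).clm_comp φ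

/-- Schauder's theorem for operators between Hilbert spaces. -/
lemma isCompactOperator_adjoint {K : H₂ →L[ℂ] H₁} (hK : IsCompactOperator K) :
    IsCompactOperator (ContinuousLinearMap.adjoint K) := by
  have hcl : IsClosed {T : H₁ →L[ℂ] H₂ | IsCompactOperator T} :=
    isClosed_setOfPred_isCompactOperator
  refine hcl.closure_subset_iff.2 subset_rfl (Metric.mem_closure_iff.2 fun ε hε => ?_)
  obtain ⟨V, _, -, hV⟩ := exists_stable_approx (G := Unit) (H₁ := H₁) 1 K hK (half_pos hε)
  refine ⟨ContinuousLinearMap.adjoint K ∘L V.starProjection, ?_, ?_⟩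
  · exact isCompactOperator_comp_orthogonalProjectionOnto V
      (ContinuousLinearMap.adjoint K ∘L V.subtypeL)
  · have : ContinuousLinearMap.adjoint K - ContinuousLinearMap.adjoint K ∘L V.starProjection =
        ContinuousLinearMap.adjoint (K - V.starProjection ∘L K) := by
      rw [map_sub, ContinuousLinearMap.adjoint_comp,
        ContinuousLinearMap.isSelfAdjoint_iff'.1 (isSelfAdjoint_starProjection V)]
    rw [dist_eq_norm, this, LinearIsometryEquiv.norm_map]
    linarith

/-- The projection onto an irreducible stable subspace which embeds in `H₂`: by Schur's lemma
it is a multiple of `Φ* Φ`, where `Φ` extends the embedding by zero. -/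
lemma starProjection_mem_interSpan_of_minimal
    (π₁ : G →* (H₁ →L[ℂ] H₁)) (π₂ : G →* (H₂ →L[ℂ] H₂))
    (hu₁ : ∀ s, π₁ s ∈ unitary (H₁ →L[ℂ] H₁)) (hu₂ : ∀ s, π₂ s ∈ unitary (H₂ →L[ℂ] H₂))
    (hemb : ∀ (W : Type) [AddCommGroup W]
      [Module ℂ W] [Module (MonoidAlgebra ℂ G) W]
      [IsScalarTower ℂ (MonoidAlgebra ℂ G) W],
      IsSimpleModule (MonoidAlgebra ℂ G) W →
      (∃ f : W →ₗ[ℂ] H₁, Function.Injective f ∧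
          ∀ (s : G) (w : W), f ((MonoidAlgebra.of ℂ G s) • w) = π₁ s (f w)) →
       (∃ f : W →ₗ[ℂ] H₂, Function.Injective f ∧
          ∀ (s : G) (w : W), f ((MonoidAlgebra.of ℂ G s) • w) = π₂ s (f w)))
    (W : Submodule ℂ H₁) [FiniteDimensional ℂ W] (hW : IsStable π₁ W) (hne : W ≠ ⊥)
    (hmin : ∀ W' ≤ W, IsStable π₁ W' → W' = ⊥ ∨ W' = W) :
    W.starProjection ∈ interSpan π₁ π₂ := by
  let ρ₀ : Representation ℂ G H₁ :=
    { toFun := fun s => (π₁ s : H₁ →ₗ[ℂ] H₁)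
      map_one' := by ext; simp
      map_mul' := fun x y => by ext; simp }
  let σ : Subrepresentation ρ₀ := ⟨W, fun s v hv => hW s v hv⟩
  let ρ : Representation ℂ G W := σ.toRepresentation
  have hρ : ∀ s (w : W), ((ρ s w : W) : H₁) = π₁ s w := fun s w => rfl
  have hirr : ρ.IsIrreducible := by
    have : Nontrivial W := Submodule.nontrivial_iff_ne_bot.2 hne
    refine { exists_pair_ne := ⟨⊥, ⊤, fun h => ?_⟩, eq_bot_or_eq_top := fun N => ?_ }
    · have := congrArg Subrepresentation.toSubmodule h
      exact bot_ne_top this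
    · have hN : IsStable π₁ (N.toSubmodule.map W.subtype) := by
        rintro s _ ⟨w, hw, rfl⟩
        exact ⟨ρ s w, N.apply_mem_toSubmodule s hw, rfl⟩
      rcases hmin _ (Submodule.map_subtype_le _ _) hN with h | h
      · left
        refine Subrepresentation.toSubmodule_injective ?_
        exact Submodule.map_injective_of_injective W.injective_subtype
          (h.trans (Submodule.map_bot _).symm)
      · right
        refine Subrepresentation.toSubmodule_injective ?_
        refine Submodule.map_injective_of_injective W.injective_subtype ?_
        rw [h]; exact (Submodule.map_subtype_top W).symm
  have hsmul : ∀ (s : G) (w : ρ.asModule),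
      ρ.asModuleEquiv (MonoidAlgebra.of ℂ G s • w) = ρ s (ρ.asModuleEquiv w) := by
    intro s w
    rw [Representation.asModuleEquiv_map_smul, Representation.asAlgebraHom_of]
  obtain ⟨f, hfinj, hf⟩ := hemb ρ.asModule
    ((Representation.irreducible_iff_isSimpleModule_asModule ρ).1 hirr)
    ⟨W.subtype ∘ₗ ρ.asModuleEquiv.toLinearMap,
      W.injective_subtype.comp ρ.asModuleEquiv.injective, fun s w => by
        simp only [LinearMap.comp_apply, LinearEquiv.coe_coe, hsmul]; rfl⟩
  let φ : W →L[ℂ] H₂ := LinearMap.toContinuousLinearMap (f ∘ₗ ρ.asModuleEquiv.symm.toLinearMap)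
  have hφinj : Function.Injective φ := hfinj.comp ρ.asModuleEquiv.symm.injective
  have hφ : ∀ s w, φ (ρ s w) = π₂ s (φ w) := by
    intro s w
    change f (ρ.asModuleEquiv.symm (ρ s w)) = π₂ s (f (ρ.asModuleEquiv.symm w))
    rw [Representation.asModuleEquiv_symm_map_rho, hf]
  let Φ : H₁ →L[ℂ] H₂ := φ ∘L W.orthogonalProjectionOnto
  have hproj : ∀ s v, W.orthogonalProjectionOnto (π₁ s v) = ρ s (W.orthogonalProjectionOnto v) :=
    fun s v => Subtype.ext (hW.starProjection hu₁ s v)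
  have hΦ : Intertwines π₂ π₁ Φ := fun s v => by
    change φ (W.orthogonalProjectionOnto (π₁ s v)) = _
    rw [hproj, hφ]; rfl
  have hΦc : IsCompactOperator Φ :=
    isCompactOperator_comp_orthogonalProjectionOnto W φ
  let B : W →L[ℂ] W := ContinuousLinearMap.adjoint φ ∘L φ
  have hΦB : ContinuousLinearMap.adjoint Φ ∘L Φ =
      W.subtypeL ∘L B ∘L W.orthogonalProjectionOnto := by
    simp only [Φ, B, ContinuousLinearMap.adjoint_comp, Submodule.adjoint_orthogonalProjectionOnto]
    rfl
  have hBs : ∀ s w, B (ρ s w) = ρ s (B w) := by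
    intro s w
    refine ext_inner_right ℂ fun u => ?_
    have e1 : inner ℂ (ρ s (B w)) u = inner ℂ (B w) (ρ s⁻¹ u) := by
      simp only [Submodule.coe_inner, hρ]
      exact inner_rep_left π₁ hu₁ s _ _
    rw [e1]
    change inner ℂ (ContinuousLinearMap.adjoint φ (φ _)) u =
      inner ℂ (ContinuousLinearMap.adjoint φ (φ _)) _
    rw [ContinuousLinearMap.adjoint_inner_left, ContinuousLinearMap.adjoint_inner_left, hφ, hφ,
      inner_rep_left π₂ hu₂]
  have : Nontrivial W := Submodule.nontrivial_iff_ne_bot.2 hne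
  obtain ⟨c, hc⟩ := Module.End.exists_eigenvalue (B : W →ₗ[ℂ] W)
  -- Schur: an eigenspace of `B` is stable, hence everything
  have hBc : ∀ w, B w = c • w := by
    have hst : IsStable π₁ ((Module.End.eigenspace (B : W →ₗ[ℂ] W) c).map W.subtype) := by
      rintro s _ ⟨w, hw, rfl⟩
      refine ⟨ρ s w, ?_, rfl⟩
      have hw' : B w = c • w := Module.End.mem_eigenspace_iff.1 hw
      refine Module.End.mem_eigenspace_iff.2 ?_
      change B (ρ s w) = _
      rw [hBs, hw', map_smul]
    rcases hmin _ (Submodule.map_subtype_le _ _) hst with h | h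
    · exact absurd (Submodule.map_injective_of_injective W.injective_subtype
          (h.trans (Submodule.map_bot _).symm)) hc
    · intro w
      have hw : (w : H₁) ∈ (Module.End.eigenspace (B : W →ₗ[ℂ] W) c).map W.subtype := by
        rw [h]; exact w.2
      obtain ⟨w', hw', e⟩ := hw
      obtain rfl : w' = w := Subtype.ext e
      exact Module.End.mem_eigenspace_iff.1 hw'
  have hc0 : c ≠ 0 := by
    rintro rfl
    obtain ⟨w, hw⟩ := exists_ne (0 : W)
    have h0 : inner ℂ (B w) w = 0 := by rw [hBc]; simp
    change inner ℂ (ContinuousLinearMap.adjoint φ (φ w)) w = 0 at h0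
    rw [ContinuousLinearMap.adjoint_inner_left, inner_self_eq_zero] at h0
    exact hw (hφinj (by rw [h0, map_zero]))
  have hP : W.starProjection =
      c⁻¹ • (ContinuousLinearMap.adjoint Φ ∘L
        ContinuousLinearMap.adjoint (ContinuousLinearMap.adjoint Φ)) := by
    rw [ContinuousLinearMap.adjoint_adjoint, hΦB]
    ext v
    simp [hBc, hc0]
  rw [hP]
  exact Submodule.smul_mem _ _ (Submodule.subset_span
    ⟨_, _, isCompactOperator_adjoint hΦc, hΦ.adjoint hu₂ hu₁,
      isCompactOperator_adjoint hΦc, hΦ.adjoint hu₂ hu₁, rfl⟩)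

/-- The projection onto a finite-dimensional stable subspace is the sum of the projections onto
the summands of an orthogonal decomposition into irreducible subspaces; induction on a bound `n`
for the dimension, splitting off one irreducible subspace at a time. -/
lemma starProjection_mem_interSpan
    (π₁ : G →* (H₁ →L[ℂ] H₁)) (π₂ : G →* (H₂ →L[ℂ] H₂))
    (hu₁ : ∀ s, π₁ s ∈ unitary (H₁ →L[ℂ] H₁)) (hu₂ : ∀ s, π₂ s ∈ unitary (H₂ →L[ℂ] H₂))
    (hemb : ∀ (W : Type) [AddCommGroup W]
      [Module ℂ W] [Module (MonoidAlgebra ℂ G) W]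
      [IsScalarTower ℂ (MonoidAlgebra ℂ G) W],
      IsSimpleModule (MonoidAlgebra ℂ G) W →
      (∃ f : W →ₗ[ℂ] H₁, Function.Injective f ∧
          ∀ (s : G) (w : W), f ((MonoidAlgebra.of ℂ G s) • w) = π₁ s (f w)) →
       (∃ f : W →ₗ[ℂ] H₂, Function.Injective f ∧
          ∀ (s : G) (w : W), f ((MonoidAlgebra.of ℂ G s) • w) = π₂ s (f w)))
    (n : ℕ) : ∀ (V : Submodule ℂ H₁) [FiniteDimensional ℂ V], IsStable π₁ V →
      Module.finrank ℂ V ≤ n → V.starProjection ∈ interSpan π₁ π₂ := by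
  induction n with
  | zero =>
    intro V _ _ hn
    obtain rfl : V = ⊥ := Submodule.finrank_eq_zero.1 (Nat.le_zero.1 hn)
    rw [Submodule.starProjection_bot]; exact zero_mem _
  | succ n ih =>
    intro V _ hV hn
    by_cases hV0 : V = ⊥
    · subst hV0
      rw [Submodule.starProjection_bot]; exact zero_mem _
    -- a nonzero stable subspace of least dimension is irreducible
    let S : Set (Submodule ℂ H₁) := {W | W ≤ V ∧ IsStable π₁ W ∧ W ≠ ⊥}
    obtain ⟨W, ⟨hWV, hW, hW0⟩, hWmin⟩ :=
      exists_minimalFor_of_wellFoundedLT (· ∈ S) (fun W => Module.finrank ℂ W) ⟨V, le_rfl, hV, hV0⟩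
    have hWfin : FiniteDimensional ℂ W := Submodule.finiteDimensional_of_le hWV
    have hWP := starProjection_mem_interSpan_of_minimal π₁ π₂ hu₁ hu₂ hemb W hW hW0 (by
      intro W' hle hst
      by_cases h0 : W' = ⊥
      · exact Or.inl h0
      · exact Or.inr (Submodule.eq_of_le_of_finrank_le hle
          (hWmin ⟨hle.trans hWV, hst, h0⟩ (Submodule.finrank_mono hle))))
    let V' : Submodule ℂ H₁ := Wᗮ ⊓ V
    have hV'fin : FiniteDimensional ℂ V' := Submodule.finiteDimensional_of_le inf_le_right
    have hdim : Module.finrank ℂ V' ≤ n := by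
      have hadd := Submodule.finrank_add_inf_finrank_orthogonal hWV
      have hpos : 0 < Module.finrank ℂ W :=
        Nat.pos_of_ne_zero fun h => hW0 (Submodule.finrank_eq_zero.1 h)
      change _ + Module.finrank ℂ V' = _ at hadd
      omega
    have hVP := ih V' (fun s v hv => ⟨hW.orthogonal hu₁ s v hv.1, hV s v hv.2⟩) hdim
    have hsum : V.starProjection = W.starProjection + V'.starProjection := by
      ext v
      have m1 := Submodule.starProjection_apply_mem W v
      have m2 := Submodule.starProjection_apply_mem V' v
      refine Submodule.eq_starProjection_of_mem_of_inner_eq_zero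
        (add_mem (hWV m1) m2.2) fun u hu => ?_
      have o1 := Submodule.starProjection_inner_eq_zero (K := W) v
      have o2 := Submodule.starProjection_inner_eq_zero (K := V') v
      have hw := Submodule.starProjection_apply_mem W u
      have hu' : u - W.starProjection u ∈ V' :=
        ⟨W.sub_starProjection_mem_orthogonal u, sub_mem hu (hWV hw)⟩
      have e1 : inner ℂ (V'.starProjection v) (W.starProjection u) = 0 :=
        (Submodule.mem_orthogonal' _ _).1 m2.1 _ hw
      have e2 : inner ℂ (W.starProjection v) (u - W.starProjection u) = 0 :=
        (Submodule.mem_orthogonal _ _).1 hu'.1 _ m1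
      have e3 := o1 _ hw
      have e4 := o2 _ hu'
      rw [inner_sub_left] at e3 e4
      have hdec : u = W.starProjection u + (u - W.starProjection u) := by abel
      rw [hdec, add_apply, inner_sub_left, inner_add_left, inner_add_right,
        inner_add_right, inner_add_right, e1, e2]
      linear_combination e3 + e4
    rw [hsum]; exact add_mem hWP hVP

/-- `interSpan` is a right ideal in the commutant of `π₁`, since `T S* K = T (K* S)*`. -/
lemma comp_mem_interSpan
    (π₁ : G →* (H₁ →L[ℂ] H₁)) (π₂ : G →* (H₂ →L[ℂ] H₂))
    (hu₁ : ∀ s, π₁ s ∈ unitary (H₁ →L[ℂ] H₁))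
    {K L : H₁ →L[ℂ] H₁} (hKi : Intertwines π₁ π₁ K) (hL : L ∈ interSpan π₁ π₂) :
    L ∘L K ∈ interSpan π₁ π₂ := by
  induction hL using Submodule.span_induction with
  | mem L hL =>
    obtain ⟨T, S, hT, hTi, hS, hSi, rfl⟩ := hL
    refine Submodule.subset_span ⟨T, ContinuousLinearMap.adjoint K ∘L S, hT, hTi,
      hS.clm_comp (ContinuousLinearMap.adjoint K), fun s v => ?_, ?_⟩
    · simp only [ContinuousLinearMap.comp_apply]
      rw [hSi, hKi.adjoint hu₁ hu₁]
    · rw [ContinuousLinearMap.adjoint_comp, ContinuousLinearMap.adjoint_adjoint,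
        ContinuousLinearMap.comp_assoc]
  | zero => rw [ContinuousLinearMap.zero_comp]; exact zero_mem _
  | add x y _ _ hx hy => rw [ContinuousLinearMap.add_comp]; exact add_mem hx hy
  | smul c x _ hx => rw [ContinuousLinearMap.smul_comp]; exact Submodule.smul_mem _ _ hx

/-- The fibrewise form of the theorem: compact self-intertwiners of `H₁` are limits of sums of
`T S*`, with `T` and `S` compact intertwiners from `H₂` to `H₁`. -/
lemma exists_interSpan_approx [Finite G]
    (π₁ : G →* (H₁ →L[ℂ] H₁)) (π₂ : G →* (H₂ →L[ℂ] H₂))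
    (hu₁ : ∀ s, π₁ s ∈ unitary (H₁ →L[ℂ] H₁)) (hu₂ : ∀ s, π₂ s ∈ unitary (H₂ →L[ℂ] H₂))
    (hemb : ∀ (W : Type) [AddCommGroup W]
      [Module ℂ W] [Module (MonoidAlgebra ℂ G) W]
      [IsScalarTower ℂ (MonoidAlgebra ℂ G) W],
      IsSimpleModule (MonoidAlgebra ℂ G) W →
      (∃ f : W →ₗ[ℂ] H₁, Function.Injective f ∧
          ∀ (s : G) (w : W), f ((MonoidAlgebra.of ℂ G s) • w) = π₁ s (f w)) →
       (∃ f : W →ₗ[ℂ] H₂, Function.Injective f ∧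
          ∀ (s : G) (w : W), f ((MonoidAlgebra.of ℂ G s) • w) = π₂ s (f w)))
    {K : H₁ →L[ℂ] H₁} (hK : IsCompactOperator K) (hKi : Intertwines π₁ π₁ K)
    {ε : ℝ} (hε : 0 < ε) : ∃ L ∈ interSpan π₁ π₂, ‖K - L‖ ≤ ε := by
  obtain ⟨V, _, hV, hle⟩ := exists_stable_approx π₁ K hK hε
  exact ⟨_, comp_mem_interSpan π₁ π₂ hu₁ hKi
    (starProjection_mem_interSpan π₁ π₂ hu₁ hu₂ hemb _ V hV le_rfl), hle⟩

end Operators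

/-- The bimodule `C₀(X, 𝔎(H₂, H₁))^Γ`. -/
def fixBimod {X Γ H₁ H₂ : Type} [TopologicalSpace X] [Group Γ] [MulAction Γ X]
    [NormedAddCommGroup H₁] [InnerProductSpace ℂ H₁]
    [NormedAddCommGroup H₂] [InnerProductSpace ℂ H₂]
    (π₁ : Γ →* (H₁ →L[ℂ] H₁)) (π₂ : Γ →* (H₂ →L[ℂ] H₂)) : Set (C₀(X, H₂ →L[ℂ] H₁)) :=
  {g | (∀ x, IsCompactOperator (g x)) ∧
    ∀ (γ : Γ) (x : X), g (γ • x) = π₁ γ ∘L g x ∘L π₂ γ⁻¹}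

/-- The span of the functions `g₁ g₂*`, where `g₁` and `g₂` lie in `C₀(X, 𝔎(H₂, H₁))^Γ`. -/
noncomputable def fixSpan {X Γ H₁ H₂ : Type} [TopologicalSpace X] [Group Γ] [MulAction Γ X]
    [NormedAddCommGroup H₁] [InnerProductSpace ℂ H₁] [CompleteSpace H₁]
    [NormedAddCommGroup H₂] [InnerProductSpace ℂ H₂] [CompleteSpace H₂]
    (π₁ : Γ →* (H₁ →L[ℂ] H₁)) (π₂ : Γ →* (H₂ →L[ℂ] H₂)) : Submodule ℂ (C₀(X, H₁ →L[ℂ] H₁)) :=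
  Submodule.span ℂ {h | ∃ g₁ ∈ fixBimod π₁ π₂, ∃ g₂ ∈ fixBimod π₁ π₂,
    ∀ x, h x = g₁ x ∘L ContinuousLinearMap.adjoint (g₂ x)}

/-! ### Functions vanishing at infinity -/

section ZeroAtInfty

set_option linter.unusedSectionVars false

variable {X E : Type} [TopologicalSpace X] [NormedAddCommGroup E] [NormedSpace ℂ E]

lemma exists_smul_zeroAtInfty (χ : C(X, ℝ)) (hχ : ∀ x, χ x ∈ Set.Icc (0 : ℝ) 1) (g : C₀(X, E)) :
    ∃ g' : C₀(X, E), ∀ x, g' x = (χ x : ℂ) • g x := by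
  refine ⟨⟨⟨fun x => (χ x : ℂ) • g x, by fun_prop⟩, ?_⟩, fun x => rfl⟩
  refine squeeze_zero_norm (fun x => ?_) (tendsto_zero_iff_norm_tendsto_zero.1 g.zero_at_infty')
  change ‖(χ x : ℂ) • g x‖ ≤ ‖g x‖
  rw [norm_smul, Complex.norm_real, Real.norm_of_nonneg (hχ x).1]
  exact mul_le_of_le_one_left (norm_nonneg _) (hχ x).2

lemma exists_zeroAtInfty_of_hasCompactSupport (g : X → E) (hg : Continuous g)
    (hs : HasCompactSupport g) : ∃ g' : C₀(X, E), ∀ x, g' x = g x :=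
  ⟨⟨⟨g, hg⟩, hs.is_zero_at_infty⟩, fun _ => rfl⟩

lemma sum_zeroAtInfty_apply {ι : Type} (s : Finset ι) (G : ι → C₀(X, E)) (x : X) :
    (∑ i ∈ s, G i) x = ∑ i ∈ s, G i x := by
  classical
  induction s using Finset.induction_on with
  | empty => simp
  | insert a s ha ih => rw [Finset.sum_insert ha, Finset.sum_insert ha, ← ih]; rfl

lemma isCompact_le_norm_zeroAtInfty (g : C₀(X, E)) {ε : ℝ} (hε : 0 < ε) :
    IsCompact {x | ε ≤ ‖g x‖} := by
  have h := (tendsto_zero_iff_norm_tendsto_zero.1 g.zero_at_infty').eventually (gt_mem_nhds hε)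
  obtain ⟨C, hC, hCs⟩ := Filter.mem_cocompact.1 h
  refine hC.of_isClosed_subset (isClosed_le continuous_const (by fun_prop)) fun x hx => ?_
  by_contra hxC
  have h' : ‖g x‖ < ε := hCs hxC
  exact not_lt.2 hx h'

lemma exists_adjoint_zeroAtInfty {H₁ H₂ : Type}
    [NormedAddCommGroup H₁] [InnerProductSpace ℂ H₁] [CompleteSpace H₁]
    [NormedAddCommGroup H₂] [InnerProductSpace ℂ H₂] [CompleteSpace H₂]
    (g : C₀(X, H₂ →L[ℂ] H₁)) :
    ∃ h : C₀(X, H₁ →L[ℂ] H₂), ∀ x, h x = ContinuousLinearMap.adjoint (g x) := by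
  refine ⟨⟨⟨fun x => ContinuousLinearMap.adjoint (g x), ?_⟩, ?_⟩, fun x => rfl⟩
  · exact ContinuousLinearMap.adjoint.continuous.comp g.continuous
  · have := (ContinuousLinearMap.adjoint (𝕜 := ℂ) (E := H₂) (F := H₁)).continuous.tendsto 0
    rw [map_zero] at this
    exact this.comp g.zero_at_infty'

lemma exists_comp_zeroAtInfty {H₁ H₂ H₃ : Type}
    [NormedAddCommGroup H₁] [NormedSpace ℂ H₁] [NormedAddCommGroup H₂] [NormedSpace ℂ H₂]
    [NormedAddCommGroup H₃] [NormedSpace ℂ H₃]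
    (g : C₀(X, H₂ →L[ℂ] H₁)) (g' : C₀(X, H₃ →L[ℂ] H₂)) :
    ∃ h : C₀(X, H₃ →L[ℂ] H₁), ∀ x, h x = g x ∘L g' x := by
  refine ⟨⟨⟨fun x => g x ∘L g' x, g.continuous.clm_comp g'.continuous⟩, ?_⟩, fun x => rfl⟩
  have h := (tendsto_zero_iff_norm_tendsto_zero.1 g.zero_at_infty').mul
    (tendsto_zero_iff_norm_tendsto_zero.1 g'.zero_at_infty')
  rw [mul_zero] at h
  exact squeeze_zero_norm (fun x => ContinuousLinearMap.opNorm_comp_le _ _) h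

/-- A finite partition of unity on a compact set, with total mass at most one elsewhere. -/
lemma exists_finite_partition [LocallyCompactSpace X] [T2Space X] {ι : Type} [Fintype ι]
    {K : Set X} (hK : IsCompact K) (U : ι → Set X) (hU : ∀ i, IsOpen (U i))
    (hKU : K ⊆ ⋃ i, U i) :
    ∃ p : ι → C(X, ℝ), (∀ i x, p i x ≠ 0 → x ∈ U i) ∧ (∀ i x, 0 ≤ p i x) ∧
      (∀ x, ∑ i, p i x ≤ 1) ∧ ∀ x ∈ K, ∑ i, p i x = 1 := by
  obtain ⟨p, hp, -⟩ := PartitionOfUnity.exists_isSubordinate_of_locallyFinite_t2space hK U hU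
    (locallyFinite_of_finite _) hKU
  refine ⟨p, fun i x hx => hp i (subset_tsupport _ hx), fun i x => p.nonneg i x, fun x => ?_,
    fun x hx => ?_⟩
  · rw [← finsum_eq_sum_of_fintype]; exact p.sum_le_one x
  · rw [← finsum_eq_sum_of_fintype]; exact p.sum_eq_one hx

end ZeroAtInfty

/-! ### Equivariant sections -/

section Sections

variable {X Γ H H₁ H₂ : Type} [TopologicalSpace X] [LocallyCompactSpace X] [T2Space X]
  [Group Γ] [Finite Γ] [MulAction Γ X]
  [NormedAddCommGroup H] [InnerProductSpace ℂ H] [CompleteSpace H]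
  [NormedAddCommGroup H₁] [InnerProductSpace ℂ H₁] [CompleteSpace H₁]
  [NormedAddCommGroup H₂] [InnerProductSpace ℂ H₂] [CompleteSpace H₂]

set_option linter.unusedSectionVars false

lemma norm_rep_le (π : Γ →* (H →L[ℂ] H)) (hu : ∀ γ, π γ ∈ unitary (H →L[ℂ] H)) (γ : Γ) :
    ‖π γ‖ ≤ 1 := by
  refine ContinuousLinearMap.opNorm_le_bound _ zero_le_one fun v => ?_
  have h : inner ℂ (π γ v) (π γ v) = inner ℂ v v := by
    rw [inner_rep_left π hu, rep_inv_apply]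
  rw [inner_self_eq_norm_sq_to_K, inner_self_eq_norm_sq_to_K] at h
  have h' : ‖π γ v‖ ^ 2 = ‖v‖ ^ 2 := by exact_mod_cast h
  rw [one_mul]
  exact ((sq_eq_sq₀ (norm_nonneg _) (norm_nonneg _)).1 h').le

lemma norm_conj_le (π : Γ →* (H →L[ℂ] H)) (hu : ∀ γ, π γ ∈ unitary (H →L[ℂ] H)) (γ : Γ)
    (A : H →L[ℂ] H) : ‖π γ ∘L A ∘L π γ⁻¹‖ ≤ ‖A‖ := by
  calc ‖π γ ∘L A ∘L π γ⁻¹‖ ≤ ‖π γ‖ * (‖A‖ * ‖π γ⁻¹‖) :=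
        (ContinuousLinearMap.opNorm_comp_le _ _).trans
          (mul_le_mul_of_nonneg_left (ContinuousLinearMap.opNorm_comp_le _ _) (norm_nonneg _))
    _ ≤ 1 * (‖A‖ * 1) := by
        gcongr <;> exact norm_rep_le π hu _
    _ = ‖A‖ := by ring

/-- `C₀(X, 𝔎(H₂, H₁))^Γ` is a module over the invariant continuous functions. -/
lemma smul_mem_fixBimod {π₁ : Γ →* (H₁ →L[ℂ] H₁)} {π₂ : Γ →* (H₂ →L[ℂ] H₂)}
    {χ : X → ℝ} (hinv : ∀ (γ : Γ) x, χ (γ • x) = χ x)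
    {g g' : C₀(X, H₂ →L[ℂ] H₁)} (hg : g ∈ fixBimod π₁ π₂) (h : ∀ x, g' x = (χ x : ℂ) • g x) :
    g' ∈ fixBimod π₁ π₂ := by
  refine ⟨fun x => ?_, fun γ x => ?_⟩
  · rw [h]; exact (hg.1 x).smul (χ x : ℂ)
  · rw [h, h, hinv, hg.2]; ext v; simp

/-- `fixSpan` is a module over the invariant continuous functions `X → [0, 1]`. -/
lemma smul_mem_fixSpan {π₁ : Γ →* (H₁ →L[ℂ] H₁)} {π₂ : Γ →* (H₂ →L[ℂ] H₂)}
    (χ : C(X, ℝ)) (hχ : ∀ x, χ x ∈ Set.Icc (0 : ℝ) 1) (hinv : ∀ (γ : Γ) x, χ (γ • x) = χ x)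
    {F : C₀(X, H₁ →L[ℂ] H₁)} (hF : F ∈ fixSpan π₁ π₂) :
    ∀ F' : C₀(X, H₁ →L[ℂ] H₁), (∀ x, F' x = (χ x : ℂ) • F x) → F' ∈ fixSpan π₁ π₂ := by
  induction hF using Submodule.span_induction with
  | mem F hF =>
    intro F' hF'
    obtain ⟨g₁, hg₁, g₂, hg₂, h⟩ := hF
    obtain ⟨g, hg⟩ := exists_smul_zeroAtInfty χ hχ g₁
    refine Submodule.subset_span ⟨g, smul_mem_fixBimod hinv hg₁ hg, g₂, hg₂, fun x => ?_⟩
    rw [hF', h, hg, ContinuousLinearMap.smul_comp]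
  | zero =>
    intro F' hF'
    obtain rfl : F' = 0 := by ext1 x; rw [hF']; simp
    exact zero_mem _
  | add F₁ F₂ _ _ h₁ h₂ =>
    intro F' hF'
    obtain ⟨G₁, hG₁⟩ := exists_smul_zeroAtInfty χ hχ F₁
    obtain ⟨G₂, hG₂⟩ := exists_smul_zeroAtInfty χ hχ F₂
    obtain rfl : F' = G₁ + G₂ := by
      ext1 x; rw [hF', ZeroAtInftyContinuousMap.add_apply, ZeroAtInftyContinuousMap.add_apply,
        hG₁, hG₂, smul_add]
    exact add_mem (h₁ _ hG₁) (h₂ _ hG₂)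
  | smul c F _ h =>
    intro F' hF'
    obtain ⟨G, hG⟩ := exists_smul_zeroAtInfty χ hχ F
    obtain rfl : F' = c • G := by
      ext1 x; rw [hF', ZeroAtInftyContinuousMap.smul_apply, ZeroAtInftyContinuousMap.smul_apply,
        hG, smul_comm]
    exact Submodule.smul_mem _ _ (h _ hG)

lemma fixSpan_equivariant {π₁ : Γ →* (H₁ →L[ℂ] H₁)} {π₂ : Γ →* (H₂ →L[ℂ] H₂)}
    (hu₁ : ∀ s, π₁ s ∈ unitary (H₁ →L[ℂ] H₁)) (hu₂ : ∀ s, π₂ s ∈ unitary (H₂ →L[ℂ] H₂))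
    {F : C₀(X, H₁ →L[ℂ] H₁)} (hF : F ∈ fixSpan π₁ π₂) (γ : Γ) (x : X) :
    F (γ • x) = π₁ γ ∘L F x ∘L π₁ γ⁻¹ := by
  induction hF using Submodule.span_induction with
  | mem F hF =>
    obtain ⟨g₁, hg₁, g₂, hg₂, h⟩ := hF
    rw [h, h, hg₁.2, hg₂.2]
    simp only [ContinuousLinearMap.adjoint_comp, adjoint_rep π₁ hu₁, adjoint_rep π₂ hu₂, inv_inv]
    ext v
    simp [rep_inv_apply]
  | zero => ext v; simp
  | add F₁ F₂ _ _ h₁ h₂ =>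
    rw [ZeroAtInftyContinuousMap.add_apply, h₁, h₂]; ext v; simp
  | smul c F _ h =>
    rw [ZeroAtInftyContinuousMap.smul_apply, h]; ext v; simp

/-- Every compact `Γ_x`-intertwiner is the value at `x` of an element of `C₀(X, 𝔎(H₂, H₁))^Γ`:
average over `Γ` the product of the intertwiner with a bump function at `x` that vanishes at the
other points of the orbit. -/
lemma exists_fixBimod_apply_eq (hcont : ∀ γ : Γ, Continuous fun x : X => γ • x)
    (π₁ : Γ →* (H₁ →L[ℂ] H₁)) (π₂ : Γ →* (H₂ →L[ℂ] H₂)) (x₀ : X)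
    {T : H₂ →L[ℂ] H₁} (hT : IsCompactOperator T)
    (hTi : Intertwines (π₁.comp (stabilizer Γ x₀).subtype) (π₂.comp (stabilizer Γ x₀).subtype) T) :
    ∃ g ∈ fixBimod π₁ π₂, g x₀ = T := by
  classical
  have := Fintype.ofFinite Γ
  have hfin : (MulAction.orbit Γ x₀ \ {x₀}).Finite :=
    (Set.finite_range fun γ : Γ => γ • x₀).subset Set.sdiff_subset
  obtain ⟨ρ, hρ1, hρ0, hρc, -⟩ := exists_continuous_one_zero_of_isCompact
    (isCompact_singleton (x := x₀)) hfin.isClosed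
    (Set.disjoint_singleton_left.2 fun h => h.2 rfl)
  let n : ℕ := (Finset.univ.filter fun γ : Γ => γ • x₀ = x₀).card
  have hn : (n : ℂ) ≠ 0 :=
    Nat.cast_ne_zero.2 (Finset.card_ne_zero_of_mem (a := (1 : Γ)) (by simp))
  let A : Γ → H₂ →L[ℂ] H₁ := fun γ => (n : ℂ)⁻¹ • (π₁ γ ∘L T ∘L π₂ γ⁻¹)
  have hterm : ∀ γ : Γ, ∃ g : C₀(X, H₂ →L[ℂ] H₁), ∀ x, g x = (ρ (γ⁻¹ • x) : ℂ) • A γ := by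
    intro γ
    refine exists_zeroAtInfty_of_hasCompactSupport _ ?_ ?_
    · exact (Complex.continuous_ofReal.comp (ρ.continuous.comp (hcont γ⁻¹))).smul continuous_const
    · have h1 : HasCompactSupport fun x => ρ (γ⁻¹ • x) :=
        hρc.comp_homeomorph
          { toEquiv := MulAction.toPerm γ⁻¹
            continuous_toFun := hcont γ⁻¹
            continuous_invFun := by
              change Continuous fun x : X => γ⁻¹⁻¹ • x
              exact hcont _ }
      refine h1.mono fun x hx => ?_
      intro h0
      exact hx (by simp [h0])
  choose G hG using hterm
  have hsum : ∀ x, (∑ γ, G γ) x = ∑ γ, (ρ (γ⁻¹ • x) : ℂ) • A γ := by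
    intro x
    rw [sum_zeroAtInfty_apply]
    exact Finset.sum_congr rfl fun γ _ => hG γ x
  refine ⟨∑ γ, G γ, ⟨fun x => ?_, fun δ x => ?_⟩, ?_⟩
  · rw [hsum]
    have hmem : ∀ γ, A γ ∈ compactOperator (RingHom.id ℂ) H₂ H₁ := fun γ =>
      Submodule.smul_mem _ _ (((hT.comp_clm (π₂ γ⁻¹)).clm_comp (π₁ γ)))
    exact Submodule.sum_mem (compactOperator (RingHom.id ℂ) H₂ H₁)
      fun γ _ => Submodule.smul_mem _ _ (hmem γ)
  · rw [hsum, hsum, ← Equiv.sum_comp (Equiv.mulLeft δ)]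
    ext v
    simp [A, mul_smul, map_sum]
  · rw [hsum]
    have hval : ∀ γ : Γ, (ρ (γ⁻¹ • x₀) : ℂ) • A γ =
        if γ • x₀ = x₀ then (n : ℂ)⁻¹ • T else 0 := by
      intro γ
      split_ifs with h
      · have h' : γ⁻¹ • x₀ = x₀ := by rw [inv_smul_eq_iff, h]
        have hρ : ρ x₀ = 1 := hρ1 rfl
        have hA : π₁ γ ∘L T ∘L π₂ γ⁻¹ = T := by
          ext v
          have := hTi ⟨γ, h⟩ (π₂ γ⁻¹ v)
          change T (π₂ γ (π₂ γ⁻¹ v)) = π₁ γ (T (π₂ γ⁻¹ v)) at this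
          rw [rep_apply_inv] at this
          exact this.symm
        simp only [A]
        rw [h', hρ, hA]; simp
      · have h' : γ⁻¹ • x₀ ≠ x₀ := fun h' => h (by rw [inv_smul_eq_iff] at h'; exact h'.symm)
        have hρ : ρ (γ⁻¹ • x₀) = 0 := hρ0 ⟨⟨γ⁻¹, rfl⟩, h'⟩
        rw [hρ]; simp
    rw [Finset.sum_congr rfl fun γ _ => hval γ, ← Finset.sum_filter, Finset.sum_const,
      ← Nat.cast_smul_eq_nsmul ℂ, smul_smul]
    change ((n : ℂ) * _) • T = T
    rw [mul_inv_cancel₀ hn, one_smul]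

/-- The fibre of `fixSpan` at `x₀` contains all of `interSpan` for the stabilizer of `x₀`. -/
lemma exists_fixSpan_apply_eq (hcont : ∀ γ : Γ, Continuous fun x : X => γ • x)
    (π₁ : Γ →* (H₁ →L[ℂ] H₁)) (π₂ : Γ →* (H₂ →L[ℂ] H₂)) (x₀ : X)
    {L : H₁ →L[ℂ] H₁}
    (hL : L ∈ interSpan (π₁.comp (stabilizer Γ x₀).subtype)
      (π₂.comp (stabilizer Γ x₀).subtype)) :
    ∃ F ∈ fixSpan π₁ π₂, F x₀ = L := by
  induction hL using Submodule.span_induction with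
  | mem L hL =>
    obtain ⟨T, S, hT, hTi, hS, hSi, rfl⟩ := hL
    obtain ⟨g₁, hg₁, rfl⟩ := exists_fixBimod_apply_eq hcont π₁ π₂ x₀ hT hTi
    obtain ⟨g₂, hg₂, rfl⟩ := exists_fixBimod_apply_eq hcont π₁ π₂ x₀ hS hSi
    obtain ⟨g₃, hg₃⟩ := exists_adjoint_zeroAtInfty g₂
    obtain ⟨h, hh⟩ := exists_comp_zeroAtInfty g₁ g₃
    have hh' : ∀ x, h x = g₁ x ∘L ContinuousLinearMap.adjoint (g₂ x) := fun x => by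
      rw [hh, hg₃]
    exact ⟨h, Submodule.subset_span ⟨g₁, hg₁, g₂, hg₂, hh'⟩, hh' x₀⟩
  | zero => exact ⟨0, zero_mem _, rfl⟩
  | add L₁ L₂ _ _ h₁ h₂ =>
    obtain ⟨F₁, hF₁, rfl⟩ := h₁
    obtain ⟨F₂, hF₂, rfl⟩ := h₂
    exact ⟨F₁ + F₂, add_mem hF₁ hF₂, rfl⟩
  | smul c L _ h =>
    obtain ⟨F, hF, rfl⟩ := h
    exact ⟨c • F, Submodule.smul_mem _ _ hF, rfl⟩

/-- One half of the Morita equivalence, which only uses that the irreducible representations of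
the stabilizers which occur in `H₁` also occur in `H₂`. -/
theorem mem_closure_fixSpan
    (hcont : ∀ γ : Γ, Continuous fun x : X => γ • x)
    (π₁ : Γ →* (H₁ →L[ℂ] H₁)) (π₂ : Γ →* (H₂ →L[ℂ] H₂))
    (hu₁ : ∀ γ, π₁ γ ∈ unitary (H₁ →L[ℂ] H₁))
    (hu₂ : ∀ γ, π₂ γ ∈ unitary (H₂ →L[ℂ] H₂))
    (hemb : ∀ x : X, ∀ (W : Type) [AddCommGroup W]
      [Module ℂ W] [Module (MonoidAlgebra ℂ (stabilizer Γ x)) W]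
      [IsScalarTower ℂ (MonoidAlgebra ℂ (stabilizer Γ x)) W],
      IsSimpleModule (MonoidAlgebra ℂ (stabilizer Γ x)) W →
      (∃ f : W →ₗ[ℂ] H₁, Function.Injective f ∧
          ∀ (s : stabilizer Γ x) (w : W),
            f ((MonoidAlgebra.of ℂ (stabilizer Γ x) s) • w) = π₁ s (f w)) →
       (∃ f : W →ₗ[ℂ] H₂, Function.Injective f ∧
          ∀ (s : stabilizer Γ x) (w : W),
            f ((MonoidAlgebra.of ℂ (stabilizer Γ x) s) • w) = π₂ s (f w)))
    (f : C₀(X, H₁ →L[ℂ] H₁)) (hfc : ∀ x, IsCompactOperator (f x))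
    (hf : ∀ (γ : Γ) (x : X), f (γ • x) = π₁ γ ∘L f x ∘L π₁ γ⁻¹) :
    f ∈ closure ((fixSpan π₁ π₂ : Submodule ℂ (C₀(X, H₁ →L[ℂ] H₁))) :
      Set (C₀(X, H₁ →L[ℂ] H₁))) := by
  have := Fintype.ofFinite Γ
  refine Metric.mem_closure_iff.2 fun η hη => ?_
  obtain ⟨ε, hε, hεη⟩ := exists_between hη
  -- the value of `f` at `x` commutes with the stabilizer of `x`, so the fibrewise result applies
  have hloc : ∀ x : X, ∃ F ∈ fixSpan π₁ π₂, ‖f x - F x‖ < ε := by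
    intro x
    obtain ⟨L, hL, hle⟩ := exists_interSpan_approx (π₁.comp (stabilizer Γ x).subtype)
      (π₂.comp (stabilizer Γ x).subtype) (fun s => hu₁ s) (fun s => hu₂ s) (hemb x) (hfc x)
      (fun s v => by
        have h := hf s x
        rw [show (s : Γ) • x = x from s.2] at h
        change f x (π₁ s v) = π₁ s (f x v)
        conv_lhs => rw [h]
        simp only [ContinuousLinearMap.comp_apply, rep_inv_apply]) (half_pos hε)
    obtain ⟨F, hF, rfl⟩ := exists_fixSpan_apply_eq hcont π₁ π₂ x hL
    exact ⟨F, hF, by linarith⟩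
  choose F hF hFx using hloc
  -- by unitarity the neighbourhoods on which `F x` approximates `f` are `Γ`-invariant, so that
  -- a subordinate partition of unity stays subordinate when averaged over `Γ`
  let U : X → Set X := fun x => {y | ‖f y - F x y‖ < ε}
  have hUo : ∀ x, IsOpen (U x) := fun x => isOpen_lt (by fun_prop) continuous_const
  have hUinv : ∀ x (γ : Γ) y, γ • y ∈ U x → y ∈ U x := by
    intro x γ y hy
    have hy' : ‖f (γ • y) - F x (γ • y)‖ < ε := hy
    change ‖f y - F x y‖ < ε
    refine lt_of_le_of_lt ?_ hy'
    have e : f y - F x y = π₁ γ⁻¹ ∘L (f (γ • y) - F x (γ • y)) ∘L π₁ γ⁻¹⁻¹ := by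
      rw [ContinuousLinearMap.sub_comp, ContinuousLinearMap.comp_sub, ← hf,
        ← fixSpan_equivariant hu₁ hu₂ (hF x), inv_smul_smul]
    rw [e]
    exact norm_conj_le π₁ hu₁ _ _
  have hK := isCompact_le_norm_zeroAtInfty f hε
  have hKinv : ∀ (γ : Γ) y, ε ≤ ‖f y‖ → ε ≤ ‖f (γ • y)‖ := by
    intro γ y hy
    refine hy.trans ?_
    have e : f y = π₁ γ⁻¹ ∘L f (γ • y) ∘L π₁ γ⁻¹⁻¹ := by
      rw [← hf, inv_smul_smul]
    conv_lhs => rw [e]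
    exact norm_conj_le π₁ hu₁ _ _
  obtain ⟨t, ht⟩ := hK.elim_finite_subcover U hUo fun x _ => Set.mem_iUnion.2 ⟨x, hFx x⟩
  obtain ⟨p, hpU, hp0, hp1, hpK⟩ := exists_finite_partition (ι := t) hK (fun i => U i)
    (fun i => hUo i) (fun x hx => by
      obtain ⟨i, hi, hxi⟩ := Set.mem_iUnion₂.1 (ht hx)
      exact Set.mem_iUnion.2 ⟨⟨i, hi⟩, hxi⟩)
  have hN : (0 : ℝ) < Fintype.card Γ := Nat.cast_pos.2 Fintype.card_pos
  let χ : t → C(X, ℝ) := fun i =>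
    ⟨fun x => (Fintype.card Γ : ℝ)⁻¹ * ∑ γ : Γ, p i (γ • x),
      continuous_const.mul (continuous_finsetSum _ fun γ _ => (p i).continuous.comp (hcont γ))⟩
  have hχ : ∀ i x, χ i x = (Fintype.card Γ : ℝ)⁻¹ * ∑ γ : Γ, p i (γ • x) := fun _ _ => rfl
  have hχsum : ∀ x, ∑ i, χ i x = (Fintype.card Γ : ℝ)⁻¹ * ∑ γ : Γ, ∑ i, p i (γ • x) := by
    intro x
    simp only [hχ]
    rw [← Finset.mul_sum, Finset.sum_comm]
  have hχ0 : ∀ i x, 0 ≤ χ i x := fun i x =>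
    mul_nonneg (inv_nonneg.2 hN.le) (Finset.sum_nonneg fun γ _ => hp0 i _)
  have hχ1 : ∀ x, ∑ i, χ i x ≤ 1 := by
    intro x
    rw [hχsum, inv_mul_le_iff₀ hN, mul_one]
    exact (Finset.sum_le_sum fun γ _ => hp1 (γ • x)).trans (by simp)
  have hχK : ∀ x, ε ≤ ‖f x‖ → ∑ i, χ i x = 1 := by
    intro x hx
    rw [hχsum, Finset.sum_congr rfl fun γ _ => hpK (γ • x) (hKinv γ x hx)]
    simp [hN.ne']
  have hχU : ∀ i x, χ i x ≠ 0 → x ∈ U i := by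
    intro i x hx
    by_contra hxU
    refine hx ?_
    rw [hχ, Finset.sum_eq_zero, mul_zero]
    intro γ _
    by_contra h
    exact hxU (hUinv _ γ x (hpU i _ h))
  have hχinv : ∀ i (γ : Γ) x, χ i (γ • x) = χ i x := by
    intro i γ x
    rw [hχ, hχ, ← Equiv.sum_comp (Equiv.mulRight γ) fun δ => p i (δ • x)]
    simp [mul_smul]
  have hχI : ∀ i x, χ i x ∈ Set.Icc (0 : ℝ) 1 := fun i x =>
    ⟨hχ0 i x, (Finset.single_le_sum (fun j _ => hχ0 j x) (Finset.mem_univ i)).trans (hχ1 x)⟩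
  choose G hG using fun i : t => exists_smul_zeroAtInfty (χ i) (hχI i) (F i)
  have hGs : ∑ i, G i ∈ fixSpan π₁ π₂ :=
    Submodule.sum_mem _ fun i _ => smul_mem_fixSpan (χ i) (hχI i) (hχinv i) (hF i) _ (hG i)
  refine ⟨∑ i, G i, hGs, lt_of_le_of_lt ?_ hεη⟩
  rw [← ZeroAtInftyContinuousMap.dist_toBCF_eq_dist]
  refine (BoundedContinuousFunction.dist_le hε.le).2 fun x => ?_
  change dist (f x) ((∑ i, G i : C₀(X, H₁ →L[ℂ] H₁)) x) ≤ ε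
  have hsum : (∑ i, G i : C₀(X, H₁ →L[ℂ] H₁)) x = ∑ i, (χ i x : ℂ) • F i x := by
    rw [sum_zeroAtInfty_apply]
    exact Finset.sum_congr rfl fun i _ => hG i x
  have hdec : f x - ∑ i, (χ i x : ℂ) • F i x =
      ((1 - ∑ i, χ i x : ℝ) : ℂ) • f x + ∑ i, (χ i x : ℂ) • (f x - F i x) := by
    simp only [smul_sub, Finset.sum_sub_distrib, ← Finset.sum_smul]
    push_cast
    rw [sub_smul, one_smul]
    abel
  rw [dist_eq_norm, hsum, hdec]
  have h1 : ‖((1 - ∑ i, χ i x : ℝ) : ℂ) • f x‖ ≤ (1 - ∑ i, χ i x) * ε := by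
    rw [norm_smul, Complex.norm_real, Real.norm_of_nonneg (sub_nonneg.2 (hχ1 x))]
    by_cases hx : ε ≤ ‖f x‖
    · rw [hχK x hx]; simp
    · exact mul_le_mul_of_nonneg_left (not_le.1 hx).le (sub_nonneg.2 (hχ1 x))
  have h2 : ‖∑ i, (χ i x : ℂ) • (f x - F i x)‖ ≤ ∑ i, χ i x * ε := by
    refine norm_sum_le_of_le _ fun i _ => ?_
    rw [norm_smul, Complex.norm_real, Real.norm_of_nonneg (hχ0 i x)]
    by_cases hx : χ i x = 0
    · simp [hx]
    · exact mul_le_mul_of_nonneg_left (hχU i x hx).le (hχ0 i x)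
  rw [← Finset.sum_mul] at h2
  calc _ ≤ (1 - ∑ i, χ i x) * ε + (∑ i, χ i x) * ε := norm_add_le_of_le h1 h2
    _ = ε := by ring

end Sections

/-! ### The Morita equivalence -/

theorem fixed_point_algebras_morita_equivalence
    {X : Type} [TopologicalSpace X] [LocallyCompactSpace X] [T2Space X]
    {Γ : Type} [Group Γ] [Finite Γ] [MulAction Γ X]
    (hcont : ∀ γ : Γ, Continuous fun x : X => γ • x)
    {H₁ H₂ : Type}
    [NormedAddCommGroup H₁] [InnerProductSpace ℂ H₁] [CompleteSpace H₁]
    [NormedAddCommGroup H₂] [InnerProductSpace ℂ H₂] [CompleteSpace H₂]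
    (π₁ : Γ →* (H₁ →L[ℂ] H₁)) (π₂ : Γ →* (H₂ →L[ℂ] H₂))
    (hu₁ : ∀ γ, π₁ γ ∈ unitary (H₁ →L[ℂ] H₁))
    (hu₂ : ∀ γ, π₂ γ ∈ unitary (H₂ →L[ℂ] H₂))
    -- weak equivalence of `H₁` and `H₂` over each stabilizer:
    -- the same simple `ℂ[Γ_x]`-modules embed equivariantly in both
    (hweak : ∀ x : X, ∀ (W : Type) [AddCommGroup W]
      [Module ℂ W] [Module (MonoidAlgebra ℂ (stabilizer Γ x)) W]
      [IsScalarTower ℂ (MonoidAlgebra ℂ (stabilizer Γ x)) W],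
      IsSimpleModule (MonoidAlgebra ℂ (stabilizer Γ x)) W →
      ((∃ f : W →ₗ[ℂ] H₁, Function.Injective f ∧
          ∀ (s : stabilizer Γ x) (w : W),
            f ((MonoidAlgebra.of ℂ (stabilizer Γ x) s) • w) = π₁ s (f w)) ↔
       (∃ f : W →ₗ[ℂ] H₂, Function.Injective f ∧
          ∀ (s : stabilizer Γ x) (w : W),
            f ((MonoidAlgebra.of ℂ (stabilizer Γ x) s) • w) = π₂ s (f w)))) :
    -- the equivalence bimodule
    letI E : Set (C₀(X, H₂ →L[ℂ] H₁)) :=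
      {g | (∀ x, IsCompactOperator (g x)) ∧
        ∀ (γ : Γ) (x : X), g (γ • x) = π₁ γ ∘L g x ∘L π₂ γ⁻¹}
    -- density of the span of `E E*` in `A₁ = C₀(X, 𝔎(H₁))^Γ`
    (∀ f : C₀(X, H₁ →L[ℂ] H₁),
      (∀ x, IsCompactOperator (f x)) →
      (∀ (γ : Γ) (x : X), f (γ • x) = π₁ γ ∘L f x ∘L π₁ γ⁻¹) →
      f ∈ closure (Submodule.span ℂ
        {h : C₀(X, H₁ →L[ℂ] H₁) | ∃ g₁ ∈ E, ∃ g₂ ∈ E,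
          ∀ x, h x = g₁ x ∘L ContinuousLinearMap.adjoint (g₂ x)} : Set _)) ∧
    -- density of the span of `E* E` in `A₂ = C₀(X, 𝔎(H₂))^Γ`
    (∀ f : C₀(X, H₂ →L[ℂ] H₂),
      (∀ x, IsCompactOperator (f x)) →
      (∀ (γ : Γ) (x : X), f (γ • x) = π₂ γ ∘L f x ∘L π₂ γ⁻¹) →
      f ∈ closure (Submodule.span ℂ
        {h : C₀(X, H₂ →L[ℂ] H₂) | ∃ g₁ ∈ E, ∃ g₂ ∈ E,
          ∀ x, h x = ContinuousLinearMap.adjoint (g₁ x) ∘L g₂ x} : Set _)) := by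
  refine ⟨fun f hfc hf => mem_closure_fixSpan hcont π₁ π₂ hu₁ hu₂
    (fun x W _ _ _ _ hs => (hweak x W hs).1) f hfc hf, fun f hfc hf => ?_⟩
  -- the other half is the same statement for `H₂` and `H₁`, as `C₀(X, 𝔎(H₁, H₂))^Γ` consists of
  -- the adjoints of the elements of `C₀(X, 𝔎(H₂, H₁))^Γ`
  refine closure_mono ?_ (mem_closure_fixSpan hcont π₂ π₁ hu₂ hu₁
    (fun x W _ _ _ _ hs => (hweak x W hs).2) f hfc hf)
  have hadj : ∀ g ∈ fixBimod (X := X) π₂ π₁, ∃ g' ∈ fixBimod (X := X) π₁ π₂,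
      ∀ x, g' x = ContinuousLinearMap.adjoint (g x) := by
    intro g hg
    obtain ⟨g', hg'⟩ := exists_adjoint_zeroAtInfty g
    refine ⟨g', ⟨fun x => ?_, fun γ x => ?_⟩, hg'⟩
    · rw [hg']; exact isCompactOperator_adjoint (hg.1 x)
    · rw [hg', hg', hg.2, ContinuousLinearMap.adjoint_comp, ContinuousLinearMap.adjoint_comp,
        adjoint_rep π₁ hu₁, adjoint_rep π₂ hu₂, inv_inv, ContinuousLinearMap.comp_assoc]
  refine Submodule.span_mono ?_
  rintro h ⟨g₁, hg₁, g₂, hg₂, hh⟩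
  obtain ⟨k₁, hk₁, e₁⟩ := hadj g₁ hg₁
  obtain ⟨k₂, hk₂, e₂⟩ := hadj g₂ hg₂
  exact ⟨k₁, hk₁, k₂, hk₂, fun x => by
    rw [hh, e₁, e₂, ContinuousLinearMap.adjoint_adjoint]⟩
end

section
/- Let X be a locally compact Hausdorff space, Γ a finite group acting on X, and H a Hilbert space with a unitary Γ-representation, giving an action of Γ on A = C₀(X, 𝔎(H)). Then every irreducible representation of the fixed-point algebra A^Γ factors through evaluation at some point x ∈ X; more precisely, for every irreducible representation π of A^Γ there exists x ∈ X such that π vanishes on all f ∈ A^Γ with f(x) = 0, and the resulting representation of the image algebra 𝔎(H)^{Γ_x} is irreducible. -/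
/-!
The kernel of an irreducible representation is a prime ideal: if `π a ≠ 0` and `π b ≠ 0` then
`π (a * c * b) ≠ 0` for some `c` (`exists_mul_mul_ne_zero`). If no point `x` worked, every `x`
would carry some `f ∈ A^Γ` with `f x = 0` and `π f ≠ 0`. Damping `f` where its norm is small
(`normCutoff`) does not leave `A^Γ`, because the norm is `Γ`-invariant, and moves `f` by little;
as `*`-homomorphisms of C⋆-algebras are contractive, `f` may be taken to vanish on a neighbourhood
of `x`. Take also some `g` with compact support and `π g ≠ 0`. Finitely many of these
neighbourhoods cover that support, and primeness yields a product of `g` with the corresponding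
`f`s, interlaced with elements of `A^Γ`, that is identically zero but is not killed by `π`.

The fibre representation exists because evaluation `A^Γ → 𝔎(H)^{Γ_x}` is onto
(`exists_equivariant_extension`): spread an operator `T` along the orbit of `x` by averaging
`h (γ⁻¹ y) • γ T γ⁻¹`, for a bump function `h` with `h x = 1` that vanishes at the rest of the
orbit.
-/

open ZeroAtInfty MulAction

/-! ### Primeness of the kernel -/

section Prime

variable {A E : Type*} [Mul A] [NormedAddCommGroup E] [InnerProductSpace ℂ E]

/-- The kernel of a nondegenerate, topologically irreducible representation is prime. -/
theorem exists_mul_mul_ne_zero (π : A → (E →L[ℂ] E)) (hmul : ∀ a b, π (a * b) = π a * π b)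
    (hnondeg : closure ((Submodule.span ℂ
        {v : E | ∃ (f : A) (w : E), v = π f w}) : Set E) = Set.univ)
    (hirr : ∀ S : Submodule ℂ E, IsClosed (S : Set E) →
      (∀ (f : A), ∀ v ∈ S, π f v ∈ S) → S = ⊥ ∨ S = ⊤)
    {a b : A} (ha : π a ≠ 0) (hb : π b ≠ 0) : ∃ c, π (a * c * b) ≠ 0 := by
  by_contra! hc
  -- the closed invariant subspace of the vectors killed by `a * c` for every `c`
  let S : Submodule ℂ E := ⨅ c : A, LinearMap.ker (π a * π c).toLinearMap
  have hS : ∀ u, u ∈ S ↔ ∀ c, π a (π c u) = 0 := by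
    intro u
    simp [S, Submodule.mem_iInf]
  have hcl : IsClosed (S : Set E) := by
    have : (S : Set E) = ⋂ c : A, {u | π a (π c u) = 0} := by
      ext u
      simp [hS]
    rw [this]
    exact isClosed_iInter fun c => isClosed_eq (by fun_prop) continuous_const
  rcases hirr S hcl (fun f v hv => (hS _).2 fun c => by
    simpa [hmul] using (hS v).1 hv (c * f)) with h | h
  · apply hb
    ext v
    have : π b v ∈ S := (hS _).2 fun c => by
      simpa [hmul] using DFunLike.congr_fun (hc c) v
    simpa [h] using this
  · apply ha
    have hle : Submodule.span ℂ {v : E | ∃ (f : A) (w : E), v = π f w} ≤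
        LinearMap.ker (π a).toLinearMap := by
      rw [Submodule.span_le]
      rintro _ ⟨f, w, rfl⟩
      exact (hS w).1 (by simp [h]) f
    have hk : IsClosed {u | π a u = 0} := isClosed_eq (by fun_prop) continuous_const
    have hcl := closure_minimal (fun u hu => hle hu : _ ⊆ {u | π a u = 0}) hk
    rw [hnondeg] at hcl
    ext u
    exact hcl (Set.mem_univ u)

end Prime

/-! ### Damping a function where its norm is small -/

section Cutoff

variable {X E : Type*} [TopologicalSpace X] [NormedAddCommGroup E] [NormedSpace ℂ E]

/-- The damping factor `(t - ε)₊ / max t ε`: it vanishes for `t ≤ ε`, and equals `1 - ε / t`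
for `t ≥ ε > 0`. -/
noncomputable def cutoffFactor (ε t : ℝ) : ℝ := max 0 (t - ε) / max t ε

theorem cutoffFactor_eq_zero {ε t : ℝ} (h : t ≤ ε) : cutoffFactor ε t = 0 := by
  simp [cutoffFactor, h]

theorem cutoffFactor_nonneg {ε : ℝ} (hε : 0 < ε) (t : ℝ) : 0 ≤ cutoffFactor ε t :=
  div_nonneg (le_max_left _ _) (hε.le.trans (le_max_right _ _))

theorem cutoffFactor_le_one {ε : ℝ} (hε : 0 < ε) (t : ℝ) : cutoffFactor ε t ≤ 1 := by
  refine div_le_one_of_le₀ (max_le (hε.le.trans (le_max_right _ _)) ?_)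
    (hε.le.trans (le_max_right _ _))
  exact (by linarith : t - ε ≤ t).trans (le_max_left _ _)

theorem one_sub_cutoffFactor_mul_le {ε : ℝ} (hε : 0 < ε) (t : ℝ) :
    (1 - cutoffFactor ε t) * t ≤ ε := by
  rcases le_total t ε with h | h
  · simpa [cutoffFactor_eq_zero h] using h
  · have ht : 0 < t := hε.trans_le h
    rw [cutoffFactor, max_eq_left h, max_eq_right (by linarith)]
    field_simp
    linarith

theorem continuous_cutoffFactor {ε : ℝ} (hε : 0 < ε) : Continuous (cutoffFactor ε) :=
  Continuous.div (by fun_prop) (by fun_prop) fun _ => (hε.trans_le (le_max_right _ _)).ne'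

/-- The function `f` damped so that it vanishes where its norm is at most `ε`. -/
noncomputable def normCutoff (ε : ℝ) (hε : 0 < ε) (f : C₀(X, E)) : C₀(X, E) where
  toFun y := (cutoffFactor ε ‖f y‖ : ℂ) • f y
  continuous_toFun := by
    have h := continuous_cutoffFactor hε
    have hf : Continuous f := map_continuous f
    fun_prop
  zero_at_infty' := by
    refine squeeze_zero_norm (fun y => ?_) (by simpa using (zero_at_infty f).norm)
    rw [norm_smul, Complex.norm_real, Real.norm_of_nonneg (cutoffFactor_nonneg hε _)]
    exact mul_le_of_le_one_left (norm_nonneg _) (cutoffFactor_le_one hε _)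

theorem normCutoff_apply (ε : ℝ) (hε : 0 < ε) (f : C₀(X, E)) (y : X) :
    normCutoff ε hε f y = (cutoffFactor ε ‖f y‖ : ℂ) • f y := rfl

theorem normCutoff_eq_zero {ε : ℝ} (hε : 0 < ε) {f : C₀(X, E)} {y : X} (h : ‖f y‖ ≤ ε) :
    normCutoff ε hε f y = 0 := by
  simp [normCutoff_apply, cutoffFactor_eq_zero h]

theorem norm_sub_normCutoff_le {ε : ℝ} (hε : 0 < ε) (f : C₀(X, E)) :
    ‖f - normCutoff ε hε f‖ ≤ ε := by
  change ‖(f - normCutoff ε hε f).toBCF‖ ≤ ε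
  refine (BoundedContinuousFunction.norm_le hε.le).2 fun y => ?_
  change ‖f y - (cutoffFactor ε ‖f y‖ : ℂ) • f y‖ ≤ ε
  have : f y - (cutoffFactor ε ‖f y‖ : ℂ) • f y = ((1 - cutoffFactor ε ‖f y‖ : ℝ) : ℂ) • f y := by
    push_cast
    rw [sub_smul, one_smul]
  rw [this, norm_smul, Complex.norm_real,
    Real.norm_of_nonneg (sub_nonneg.2 (cutoffFactor_le_one hε _))]
  exact one_sub_cutoffFactor_mul_le hε _

end Cutoff

/-! ### Extending an operator at a point to an equivariant function -/

section Extension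

variable {X Γ H : Type*} [TopologicalSpace X] [LocallyCompactSpace X] [T2Space X]
  [Group Γ] [Finite Γ] [MulAction Γ X] [NormedAddCommGroup H] [InnerProductSpace ℂ H]

/-- Every compact operator commuting with the stabilizer of `x` is the value at `x` of an
equivariant `C₀` function with compact operators as values. -/
theorem exists_equivariant_extension (hcont : ∀ γ : Γ, Continuous fun x : X => γ • x)
    (πH : Γ →* (H →L[ℂ] H)) (x : X) (T : H →L[ℂ] H) (hT : IsCompactOperator T)
    (hs : ∀ s : stabilizer Γ x, πH s ∘L T = T ∘L πH s) :
    ∃ f : C₀(X, H →L[ℂ] H), f x = T ∧ (∀ y, IsCompactOperator (f y)) ∧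
      ∀ (γ : Γ) (y : X), f (γ • y) = πH γ ∘L f y ∘L πH γ⁻¹ := by
  classical
  have := Fintype.ofFinite Γ
  obtain ⟨h, h1, h0, hsupp, -⟩ := exists_continuous_one_zero_of_isCompact
    (isCompact_singleton (x := x)) ((Set.finite_range fun γ : Γ => γ • x).sdiff (t := {x})).isClosed
    Set.disjoint_sdiff_right
  have hx1 : h x = 1 := h1 rfl
  have hx0 : ∀ γ : Γ, γ • x ≠ x → h (γ • x) = 0 := fun γ hγ => h0 ⟨⟨γ, rfl⟩, hγ⟩
  have hlim : Filter.Tendsto h (Filter.cocompact X) (nhds 0) := hsupp.is_zero_at_infty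
  have hact : ∀ γ : Γ, Filter.Tendsto (fun y : X => γ • y) (Filter.cocompact X)
      (Filter.cocompact X) := by
    intro γ
    let e : X ≃ₜ X := { MulAction.toPerm γ with
      continuous_toFun := hcont γ
      continuous_invFun := hcont γ⁻¹ }
    exact e.map_cocompact.le
  -- the number of group elements fixing `x`, the multiplicity with which `T` appears at `x`
  let N : ℝ := ∑ γ : Γ, h (γ⁻¹ • x)
  have hN : 0 < N := by
    refine Finset.sum_pos' (fun γ _ => ?_) ⟨1, Finset.mem_univ _, by simp [hx1]⟩
    by_cases hγ : γ⁻¹ • x = x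
    · simp [hγ, hx1]
    · exact (hx0 _ hγ).ge
  let F : X → (H →L[ℂ] H) := fun y =>
    ∑ γ : Γ, ((h (γ⁻¹ • y) / N : ℝ) : ℂ) • (πH γ ∘L T ∘L πH γ⁻¹)
  refine ⟨⟨⟨F, ?_⟩, ?_⟩, ?_, ?_, ?_⟩
  · refine continuous_finsetSum _ fun γ _ => ?_
    have := hcont γ⁻¹
    fun_prop
  · have : Filter.Tendsto F (Filter.cocompact X)
        (nhds (∑ γ : Γ, ((0 / N : ℝ) : ℂ) • (πH γ ∘L T ∘L πH γ⁻¹))) := by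
      refine tendsto_finsetSum _ fun γ _ => Filter.Tendsto.smul_const ?_ _
      exact (Complex.continuous_ofReal.tendsto _).comp ((hlim.comp (hact γ⁻¹)).div_const N)
    simpa using this
  · change F x = T
    have hterm : ∀ γ : Γ, ((h (γ⁻¹ • x) / N : ℝ) : ℂ) • (πH γ ∘L T ∘L πH γ⁻¹) =
        ((h (γ⁻¹ • x) / N : ℝ) : ℂ) • T := by
      intro γ
      by_cases hγ : γ⁻¹ • x = x
      · have hmem : γ ∈ stabilizer Γ x := by
          rw [mem_stabilizer_iff]
          nth_rewrite 1 [← hγ]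
          simp
        have hinv : πH γ ∘L πH γ⁻¹ = ContinuousLinearMap.id ℂ H := by
          change πH γ * πH γ⁻¹ = 1
          rw [← map_mul]
          simp
        rw [← ContinuousLinearMap.comp_assoc, hs ⟨γ, hmem⟩, ContinuousLinearMap.comp_assoc, hinv,
          ContinuousLinearMap.comp_id]
      · simp [hx0 _ hγ]
    simp only [F, hterm]
    rw [← Finset.sum_smul, ← Complex.ofReal_sum, ← Finset.sum_div, div_self hN.ne']
    simp
  · intro y
    change IsCompactOperator (F y)
    have : ∀ s : Finset Γ, IsCompactOperator
        (∑ γ ∈ s, ((h (γ⁻¹ • y) / N : ℝ) : ℂ) • (πH γ ∘L T ∘L πH γ⁻¹) : H →L[ℂ] H) := by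
      intro s
      induction s using Finset.induction_on with
      | empty => simpa using isCompactOperator_zero
      | insert γ s hγ ih =>
        rw [Finset.sum_insert hγ]
        exact (((hT.comp_clm (πH γ⁻¹)).clm_comp (πH γ)).smul _).add ih
    exact this _
  · intro δ y
    change F (δ • y) = πH δ ∘L F y ∘L πH δ⁻¹
    change F (δ • y) = πH δ * (F y * πH δ⁻¹)
    simp only [F, Finset.sum_mul, Finset.mul_sum]
    refine (Fintype.sum_equiv (Equiv.mulLeft δ) _ _ fun γ => ?_).symm
    change πH δ * (_ • (πH γ * (T * πH γ⁻¹)) * πH δ⁻¹) =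
      ((h ((δ * γ)⁻¹ • δ • y) / N : ℝ) : ℂ) • (πH (δ * γ) * (T * πH (δ * γ)⁻¹))
    have : (δ * γ)⁻¹ • δ • y = γ⁻¹ • y := by
      rw [smul_smul]
      simp
    rw [this, mul_inv_rev, map_mul, map_mul, smul_mul_assoc, mul_smul_comm]
    simp only [mul_assoc]

end Extension

/-! ### Factorization through evaluation at a point -/

section FixedPoints

variable {X Γ H : Type*} [TopologicalSpace X] [Group Γ] [MulAction Γ X]
  [NormedAddCommGroup H] [InnerProductSpace ℂ H] [CompleteSpace H]
  {πH : Γ →* (H →L[ℂ] H)} {Asub : NonUnitalStarSubalgebra ℂ C₀(X, H →L[ℂ] H)}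

/-- The fixed-point algebra is norm closed, hence a C⋆-algebra. -/
theorem isClosed_fixedPointAlgebra
    (hAsub : ∀ f : C₀(X, H →L[ℂ] H), f ∈ Asub ↔
      (∀ x, IsCompactOperator (f x)) ∧
        ∀ (γ : Γ) (x : X), f (γ • x) = πH γ ∘L f x ∘L πH γ⁻¹) :
    IsClosed (Asub : Set C₀(X, H →L[ℂ] H)) := by
  have hev : ∀ x : X, Continuous fun f : C₀(X, H →L[ℂ] H) => f x := fun x =>
    (BoundedContinuousFunction.lipschitz_eval_const x).continuous.comp
      ZeroAtInftyContinuousMap.isometry_toBCF.continuous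
  have : (Asub : Set C₀(X, H →L[ℂ] H)) = (⋂ x, {f | IsCompactOperator (f x)}) ∩
      ⋂ (γ : Γ) (x : X), {f | f (γ • x) = πH γ ∘L f x ∘L πH γ⁻¹} := by
    ext f
    simp [hAsub]
  rw [this]
  refine (isClosed_iInter fun x => isClosed_setOfPred_isCompactOperator.preimage (hev x)).inter
    (isClosed_iInter fun γ => isClosed_iInter fun x => isClosed_eq (hev _) ?_)
  exact continuous_const.clm_comp ((hev x).clm_comp continuous_const)

theorem normCutoff_mem (hu : ∀ γ, πH γ ∈ unitary (H →L[ℂ] H))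
    (hAsub : ∀ f : C₀(X, H →L[ℂ] H), f ∈ Asub ↔
      (∀ x, IsCompactOperator (f x)) ∧
        ∀ (γ : Γ) (x : X), f (γ • x) = πH γ ∘L f x ∘L πH γ⁻¹)
    {ε : ℝ} (hε : 0 < ε) {f : C₀(X, H →L[ℂ] H)} (hf : f ∈ Asub) :
    normCutoff ε hε f ∈ Asub := by
  rw [hAsub] at hf ⊢
  refine ⟨fun x => (hf.1 x).smul _, fun γ x => ?_⟩
  have hnorm : ‖f (γ • x)‖ = ‖f x‖ := by
    rw [hf.2]
    change ‖πH γ * (f x * πH γ⁻¹)‖ = _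
    rw [CStarRing.norm_mem_unitary_mul _ (hu γ), CStarRing.norm_mul_mem_unitary _ (hu _)]
  rw [normCutoff_apply, normCutoff_apply, hnorm, hf.2]
  simp

/-- An element of the fixed-point algebra outside the kernel of a representation stays outside the
kernel after a small enough damping. -/
theorem exists_normCutoff_ne_zero (hu : ∀ γ, πH γ ∈ unitary (H →L[ℂ] H))
    (hAsub : ∀ f : C₀(X, H →L[ℂ] H), f ∈ Asub ↔
      (∀ x, IsCompactOperator (f x)) ∧
        ∀ (γ : Γ) (x : X), f (γ • x) = πH γ ∘L f x ∘L πH γ⁻¹)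
    {E : Type*} [NormedAddCommGroup E] [InnerProductSpace ℂ E] [CompleteSpace E]
    (π : Asub →⋆ₙₐ[ℂ] (E →L[ℂ] E)) {f : Asub} (hf : π f ≠ 0) :
    ∃ (ε : ℝ) (_ : 0 < ε) (g : Asub), π g ≠ 0 ∧
      ∀ y, ‖(f : C₀(X, H →L[ℂ] H)) y‖ ≤ ε → (g : C₀(X, H →L[ℂ] H)) y = 0 := by
  have : IsClosed (Asub : Set C₀(X, H →L[ℂ] H)) := isClosed_fixedPointAlgebra hAsub
  have hε : 0 < ‖π f‖ / 2 := half_pos (norm_pos_iff.2 hf)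
  let g : Asub := ⟨normCutoff _ hε f, normCutoff_mem hu hAsub hε f.2⟩
  refine ⟨_, hε, g, fun hg => ?_, fun y hy => normCutoff_eq_zero hε hy⟩
  have h1 : ‖π (f - g)‖ ≤ ‖f - g‖ := NonUnitalStarAlgHom.norm_apply_le π (f - g)
  have h2 : ‖f - g‖ ≤ ‖π f‖ / 2 := norm_sub_normCutoff_le hε (f : C₀(X, H →L[ℂ] H))
  have h3 : π (f - g) = π f := by
    rw [map_sub π f g, hg, sub_zero]
  rw [h3] at h1
  linarith [norm_pos_iff.2 hf]

/-- An irreducible representation of the fixed-point algebra factors through evaluation at some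
point. -/
theorem exists_forall_apply_eq_zero (hu : ∀ γ, πH γ ∈ unitary (H →L[ℂ] H))
    (hAsub : ∀ f : C₀(X, H →L[ℂ] H), f ∈ Asub ↔
      (∀ x, IsCompactOperator (f x)) ∧
        ∀ (γ : Γ) (x : X), f (γ • x) = πH γ ∘L f x ∘L πH γ⁻¹)
    {E : Type*} [NormedAddCommGroup E] [InnerProductSpace ℂ E] [CompleteSpace E] [Nontrivial E]
    (π : Asub →⋆ₙₐ[ℂ] (E →L[ℂ] E))
    (hnondeg : closure ((Submodule.span ℂ
        {v : E | ∃ (f : Asub) (w : E), v = π f w}) : Set E) = Set.univ)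
    (hirr : ∀ S : Submodule ℂ E, IsClosed (S : Set E) →
      (∀ (f : Asub), ∀ v ∈ S, π f v ∈ S) → S = ⊥ ∨ S = ⊤) :
    ∃ x : X, ∀ f : Asub, (f : C₀(X, H →L[ℂ] H)) x = 0 → π f = 0 := by
  by_contra! hno
  have hlocal : ∀ x : X, ∃ (U : Set X) (g : Asub), U ∈ nhds x ∧ π g ≠ 0 ∧
      ∀ y ∈ U, (g : C₀(X, H →L[ℂ] H)) y = 0 := by
    intro x
    obtain ⟨f, hfx, hf⟩ := hno x
    obtain ⟨ε, hε, g, hg, hfg⟩ := exists_normCutoff_ne_zero hu hAsub π hf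
    refine ⟨{y | ‖(f : C₀(X, H →L[ℂ] H)) y‖ < ε}, g, ?_, hg, fun y hy => hfg y (le_of_lt hy)⟩
    have hc : Continuous fun y => ‖(f : C₀(X, H →L[ℂ] H)) y‖ :=
      (map_continuous (f : C₀(X, H →L[ℂ] H))).norm
    exact (isOpen_lt hc continuous_const).mem_nhds (by simpa [hfx] using hε)
  choose U F hU hF hFU using hlocal
  obtain ⟨g₀, hg₀⟩ : ∃ g : Asub, π g ≠ 0 := by
    by_contra! h
    have hbot : Submodule.span ℂ {v : E | ∃ (f : Asub) (w : E), v = π f w} = ⊥ := by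
      rw [Submodule.span_eq_bot]
      rintro _ ⟨f, w, rfl⟩
      simp [h]
    obtain ⟨v, hv⟩ := exists_ne (0 : E)
    have : v ∈ closure ((⊥ : Submodule ℂ E) : Set E) := by
      rw [← hbot, hnondeg]
      trivial
    exact hv (by simpa using this)
  obtain ⟨ε, hε, g, hg, hgz⟩ := exists_normCutoff_ne_zero hu hAsub π hg₀
  obtain ⟨K, hK, hgK⟩ : ∃ K : Set X, IsCompact K ∧
      ∀ y ∉ K, (g : C₀(X, H →L[ℂ] H)) y = 0 := by
    have := (zero_at_infty (g₀ : C₀(X, H →L[ℂ] H))).norm.eventually_le_const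
      (by simpa using hε : ‖(0 : H →L[ℂ] H)‖ < ε)
    obtain ⟨K, hK, hKs⟩ := Filter.mem_cocompact.1 this
    exact ⟨K, hK, fun y hy => hgz y (hKs hy)⟩
  obtain ⟨t, -, ht⟩ := hK.elim_nhds_subcover U fun x _ => hU x
  have hprod : ∀ s : Finset X, ∃ p : Asub, π p ≠ 0 ∧
      (∀ y ∉ K, (p : C₀(X, H →L[ℂ] H)) y = 0) ∧
      ∀ x ∈ s, ∀ y ∈ U x, (p : C₀(X, H →L[ℂ] H)) y = 0 := by
    classical
    intro s
    induction s using Finset.induction_on with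
    | empty => exact ⟨g, hg, hgK, by simp⟩
    | insert x s _ ih =>
      obtain ⟨p, hp, hpK, hps⟩ := ih
      obtain ⟨c, hc⟩ := exists_mul_mul_ne_zero π (map_mul π) hnondeg hirr hp (hF x)
      refine ⟨p * c * F x, hc, fun y hy => ?_, fun z hz y hy => ?_⟩
      · simp [hpK y hy]
      · rcases Finset.mem_insert.1 hz with rfl | hz
        · simp [hFU z y hy]
        · simp [hps z hz y hy]
  obtain ⟨p, hp, hpK, hpt⟩ := hprod t
  refine hp ?_
  have : p = 0 := by
    ext1
    ext1 y
    by_cases hy : y ∈ K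
    · obtain ⟨x, hx, hyx⟩ := Set.mem_iUnion₂.1 (ht hy)
      exact hpt x hx y hyx
    · exact hpK y hy
  rw [this, map_zero]

end FixedPoints

/-!
STATEMENT 17: Let a finite group `Γ` act on a locally compact Hausdorff space
`X` and unitarily on a Hilbert space `H`, giving an action on
`A = C₀(X, 𝔎(H))` and a fixed-point algebra `A^Γ`.  Every irreducible
representation `π` of `A^Γ` factors through evaluation at some point `x ∈ X`:
there is `x` such that `π` kills every `f ∈ A^Γ` with `f(x) = 0`, and the
induced representation of the fiber algebra `𝔎(H)^{Γ_x}` is irreducible.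
-/

theorem irreducible_rep_of_fixed_point_algebra_factors_through_evaluation
    {X : Type} [TopologicalSpace X] [LocallyCompactSpace X] [T2Space X]
    {Γ : Type} [Group Γ] [Finite Γ] [MulAction Γ X]
    (hcont : ∀ γ : Γ, Continuous fun x : X => γ • x)
    {H : Type} [NormedAddCommGroup H] [InnerProductSpace ℂ H] [CompleteSpace H]
    (πH : Γ →* (H →L[ℂ] H))
    (hu : ∀ γ, πH γ ∈ unitary (H →L[ℂ] H))
    -- the fixed-point algebra `A^Γ ⊆ C₀(X, 𝔎(H))`
    (Asub : NonUnitalStarSubalgebra ℂ C₀(X, H →L[ℂ] H))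
    (hAsub : ∀ f : C₀(X, H →L[ℂ] H), f ∈ Asub ↔
      (∀ x, IsCompactOperator (f x)) ∧
        ∀ (γ : Γ) (x : X), f (γ • x) = πH γ ∘L f x ∘L πH γ⁻¹)
    -- an irreducible representation of `A^Γ` on a Hilbert space `Hπ`
    {Hπ : Type} [NormedAddCommGroup Hπ] [InnerProductSpace ℂ Hπ]
    [CompleteSpace Hπ] [Nontrivial Hπ]
    (π : Asub →⋆ₙₐ[ℂ] (Hπ →L[ℂ] Hπ))
    -- nondegeneracy
    (hnondeg : closure ((Submodule.span ℂ
        {v : Hπ | ∃ (f : Asub) (w : Hπ), v = π f w}) : Set Hπ) = Set.univ)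
    -- topological irreducibility
    (hirr : ∀ S : Submodule ℂ Hπ, IsClosed (S : Set Hπ) →
      (∀ (f : Asub), ∀ v ∈ S, π f v ∈ S) → S = ⊥ ∨ S = ⊤) :
    ∃ x : X,
      -- `π` factors through evaluation at `x`
      (∀ f : Asub, (f : C₀(X, H →L[ℂ] H)) x = 0 → π f = 0) ∧
      -- the induced representation `ρ` of the fiber algebra `𝔎(H)^{Γ_x}`
      ∃ ρ : (H →L[ℂ] H) → (Hπ →L[ℂ] Hπ),
        (∀ f : Asub, ρ ((f : C₀(X, H →L[ℂ] H)) x) = π f) ∧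
        (∀ T T' : H →L[ℂ] H,
          (IsCompactOperator T ∧ ∀ s : stabilizer Γ x, πH s ∘L T = T ∘L πH s) →
          (IsCompactOperator T' ∧ ∀ s : stabilizer Γ x, πH s ∘L T' = T' ∘L πH s) →
            ρ (T + T') = ρ T + ρ T' ∧ ρ (T ∘L T') = ρ T ∘L ρ T' ∧
            ρ (star T) = star (ρ T) ∧ ∀ z : ℂ, ρ (z • T) = z • ρ T) ∧
        -- irreducibility of the induced representation
        (∀ S : Submodule ℂ Hπ, IsClosed (S : Set Hπ) →
          (∀ T : H →L[ℂ] H,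
            (IsCompactOperator T ∧
              ∀ s : stabilizer Γ x, πH s ∘L T = T ∘L πH s) →
            ∀ v ∈ S, ρ T v ∈ S) → S = ⊥ ∨ S = ⊤) := by
  classical
  obtain ⟨x, hx⟩ := exists_forall_apply_eq_zero hu hAsub π hnondeg hirr
  have hwd : ∀ f g : Asub, (f : C₀(X, H →L[ℂ] H)) x = (g : C₀(X, H →L[ℂ] H)) x → π f = π g := by
    intro f g hfg
    rw [← sub_eq_zero, ← map_sub]
    exact hx _ (by simp [hfg])
  -- outside the range of the evaluation map the value of `ρ` is irrelevant and set to `0`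
  let ρ : (H →L[ℂ] H) → (Hπ →L[ℂ] Hπ) := fun T =>
    if h : ∃ f : Asub, (f : C₀(X, H →L[ℂ] H)) x = T then π h.choose else 0
  have hρ : ∀ f : Asub, ρ ((f : C₀(X, H →L[ℂ] H)) x) = π f := by
    intro f
    have h : ∃ g : Asub, (g : C₀(X, H →L[ℂ] H)) x = (f : C₀(X, H →L[ℂ] H)) x := ⟨f, rfl⟩
    simp only [ρ, dif_pos h]
    exact hwd _ _ h.choose_spec
  have hsurj : ∀ T : H →L[ℂ] H,
      (IsCompactOperator T ∧ ∀ s : stabilizer Γ x, πH s ∘L T = T ∘L πH s) →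
      ∃ f : Asub, (f : C₀(X, H →L[ℂ] H)) x = T := by
    rintro T ⟨hT, hs⟩
    obtain ⟨f, hfx, hf⟩ := exists_equivariant_extension hcont πH x T hT hs
    exact ⟨⟨f, (hAsub f).2 hf⟩, hfx⟩
  refine ⟨x, hx, ρ, hρ, ?_, ?_⟩
  · intro T T' hT hT'
    obtain ⟨f, rfl⟩ := hsurj T hT
    obtain ⟨g, rfl⟩ := hsurj T' hT'
    refine ⟨?_, ?_, ?_, fun z => ?_⟩
    · rw [hρ, hρ, ← map_add, ← hρ]
      rfl
    · rw [hρ, hρ]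
      change _ = π f * π g
      rw [← map_mul, ← hρ]
      rfl
    · rw [hρ, ← map_star π f, ← hρ]
      rfl
    · rw [hρ]
      refine Eq.trans ?_ (map_smul π z f)
      rw [← hρ]
      rfl
  · intro S hS hinv
    refine hirr S hS fun f v hv => ?_
    rw [← hρ]
    refine hinv _ ⟨((hAsub f).1 f.2).1 x, fun s => ?_⟩ v hv
    have h := ((hAsub f).1 f.2).2 s x
    rw [mem_stabilizer_iff.1 s.2] at h
    have hone : πH (s : Γ)⁻¹ * πH s = 1 := by
      rw [← map_mul]
      simp
    change πH s * (f : C₀(X, H →L[ℂ] H)) x = (f : C₀(X, H →L[ℂ] H)) x * πH s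
    conv_rhs => rw [h]
    change _ = πH s * (_ * πH (s : Γ)⁻¹) * πH s
    rw [mul_assoc, mul_assoc, hone, mul_one]
end
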